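/- Let V be a commutative ring and m ⊆ V an ideal satisfying m·m = m such that m̃ = m ⊗_V m is a flat V-module of projective dimension at most 1. Let R be a commutative V-algebra, I ⊆ R a nilpotent ideal, and R' = R/I. Let P' be an almost projective R'-module. Then: (i) there exist an almost projective R-module P and an R'-linear map σ : P/IP → P' which is an almost isomorphism (its kernel and cokernel are annihilated by m); (ii) if moreover P' is almost finitely presented over R', then P can be chosen to be almost finitely presented over R. -/

import Mathlib

universe u v

open CategoryTheory

/-- Almost projective module: `m·Ext^i_R(M, N) = 0` for all `N` and all `i > 0`. -/
def IsAlmostProjective (V : Type v) [CommRing V] (m : Ideal V)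
    (R : Type u) [CommRing R] [Algebra V R]
    (M : Type u) [AddCommGroup M] [Module R M] : Prop :=
  ∀ i : ℕ, 0 < i → ∀ N : ModuleCat.{u} R, ∀ a ∈ m,
    ∀ x : ((Ext R (ModuleCat.{u} R) i).obj (Opposite.op (ModuleCat.of R M))).obj N,
      algebraMap V R a • x = 0

/-- Almost finitely presented module (w.r.t. an ideal `m ⊆ V`). -/
def IsAlmostFP (V : Type v) [CommRing V] (m : Ideal V)
    (R : Type u) [CommRing R] [Algebra V R]
    (M : Type u) [AddCommGroup M] [Module R M] : Prop :=
  ∀ ε ∈ m, ∀ δ ∈ m, ∃ (n k : ℕ) (ψ : (Fin k → R) →ₗ[R] (Fin n → R))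
    (φ : (Fin n → R) →ₗ[R] M),
      (∀ x : M, algebraMap V R ε • x ∈ LinearMap.range φ) ∧
        (∀ y ∈ LinearMap.ker φ, algebraMap V R δ • y ∈ LinearMap.range ψ)

universe w

open scoped TensorProduct

/-!
Put `J = mR`. A module `M` is almost projective iff multiplication by each `a ∈ J` factors through
a free module; the scalars for which such an approximate property holds form an ideal.
Since `J * J = J` and `I` is nilpotent, an ideal of this kind that contains `J` modulo `I`, and for
which the errors multiply, contains `J`.

It therefore suffices to find a map `d : L₁ → L₀` of projective `R'`-modules with cokernel almost
`P'` and such that `0 → L₁ → L₀ → P' → 0` is contractible up to each scalar in `J`. Projective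
modules lift along `R → R'`, hence so does `d`, and the cokernel of the lift is almost projective
because a retraction of `d` up to `a` modulo `I` improves to a genuine one. Its reduction is almost
`P'`.

To find `d`, take `P₁ → P₀ → m ⊗ m` exact and a presentation `K → F → P'` with `F` free; both are
contractible up to `J`, the former because `m ⊗ m → V` is an almost isomorphism. Let `d` be the
pushout product of `R' ⊗ P₁ → R' ⊗ P₀` and `K → F`. Its target is projective. Its source is
projective, although `K` need not be: since `m ⊗ m` is flat and `m • (m ⊗ m) = m ⊗ m`, the map
`P₁ → P₀` is invertible modulo `m`, and the error terms in `m` are absorbed by the almost retraction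
of `K → F`.
-/

section Sections

variable {R M N L : Type*} [CommRing R] [AddCommGroup M] [Module R M] [AddCommGroup N] [Module R N]
  [AddCommGroup L] [Module R L]

/-- The ideal of scalars `a` for which `f` has a section up to `a`. -/
def sectionIdeal (f : M →ₗ[R] N) : Ideal R where
  carrier := {a | ∃ s : N →ₗ[R] M, f ∘ₗ s = a • LinearMap.id}
  zero_mem' := ⟨0, by simp⟩
  add_mem' := by
    rintro a b ⟨s, hs⟩ ⟨t, ht⟩
    exact ⟨s + t, by rw [LinearMap.comp_add, hs, ht, add_smul]⟩
  smul_mem' := by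
    rintro c a ⟨s, hs⟩
    exact ⟨c • s, by rw [LinearMap.comp_smul, hs, smul_smul, smul_eq_mul]⟩

theorem sectionIdeal_le_of_comp_eq {f : M →ₗ[R] N} {g : L →ₗ[R] N} {h : M →ₗ[R] L}
    (hh : g ∘ₗ h = f) : sectionIdeal f ≤ sectionIdeal g := by
  rintro a ⟨s, hs⟩
  exact ⟨h ∘ₗ s, by rw [← LinearMap.comp_assoc, hh, hs]⟩

theorem exists_comp_eq_of_forall_mem_range [Module.Projective R L] (f : M →ₗ[R] N) (g : L →ₗ[R] N)
    (hg : ∀ x, g x ∈ LinearMap.range f) : ∃ h : L →ₗ[R] M, f ∘ₗ h = g := by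
  obtain ⟨h, hh⟩ := Module.projective_lifting_property f.rangeRestrict (g.codRestrict _ hg)
    f.surjective_rangeRestrict
  exact ⟨h, LinearMap.ext fun x => congr(Subtype.val ($hh x))⟩

theorem mem_sectionIdeal_of_exact {d : L →ₗ[R] M} {f : M →ₗ[R] N} (hexact : Function.Exact d f)
    (hf : Function.Surjective f) {a : R} {g : M →ₗ[R] LinearMap.ker f}
    (hg : ∀ x, (g (d x) : M) = a • d x) : a ∈ sectionIdeal f := by
  have hq : (a • LinearMap.id - (LinearMap.ker f).subtype ∘ₗ g) ∘ₗ d = 0 :=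
    LinearMap.ext fun x => by simp [hg]
  obtain ⟨s, hs⟩ := (LinearMap.exact_lcomp_of_exact_of_surjective M hexact hf
    (a • LinearMap.id - (LinearMap.ker f).subtype ∘ₗ g)).1 hq
  refine ⟨s, LinearMap.ext fun y => ?_⟩
  obtain ⟨x, rfl⟩ := hf y
  have hsx : s (f x) = a • x - g x := LinearMap.congr_fun hs x
  simp [hsx]

variable (R M) in
/-- The ideal of scalars `a` such that `a • id` factors through a free module, equivalently through
any projective module, see `sectionIdeal_le_freeFactorIdeal`. It measures how far `M` is from being
projective. -/
noncomputable def freeFactorIdeal : Ideal R :=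
  sectionIdeal (Finsupp.linearCombination R (id : M → M))

theorem sectionIdeal_le_freeFactorIdeal [Module.Projective R L] (p : L →ₗ[R] M) :
    sectionIdeal p ≤ freeFactorIdeal R M := by
  obtain ⟨p', hp'⟩ := Module.projective_lifting_property _ p
    (Finsupp.linearCombination_id_surjective R M)
  exact sectionIdeal_le_of_comp_eq hp'

end Sections

section Ext

variable {R : Type u} [CommRing R]

theorem smul_ext_succ_eq_zero_iff {X : ModuleCat.{u} R} (P : ProjectiveResolution X) (a : R) (n : ℕ)
    (Y : ModuleCat.{u} R) :
    (∀ x : ((Ext R (ModuleCat.{u} R) (n + 1)).obj (Opposite.op X)).obj Y, a • x = 0) ↔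
      ∀ f : P.complex.X (n + 1) ⟶ Y, P.complex.d (n + 2) (n + 1) ≫ f = 0 →
        ∃ g : P.complex.X n ⟶ Y, P.complex.d (n + 1) n ≫ g = a • f := by
  let K := P.complex.linearYonedaObj R Y
  let S := K.sc' n (n + 1) (n + 2)
  let e : ((Ext R (ModuleCat.{u} R) (n + 1)).obj (Opposite.op X)).obj Y ≃ₗ[R]
      LinearMap.ker S.g.hom ⧸ LinearMap.range S.moduleCatToCycles :=
    (P.isoExt (n + 1) Y ≪≫
      ShortComplex.homologyMapIso (K.isoSc' n (n + 1) (n + 2) (by simp) (by simp)) ≪≫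
      S.moduleCatHomologyIso).toLinearEquiv
  have boundary_iff (z : LinearMap.ker S.g.hom) :
      a • (Submodule.Quotient.mk z : _ ⧸ LinearMap.range S.moduleCatToCycles) = 0 ↔
        ∃ g : P.complex.X n ⟶ Y, P.complex.d (n + 1) n ≫ g = a • z.1 := by
    rw [← Submodule.Quotient.mk_smul, Submodule.Quotient.mk_eq_zero]
    exact exists_congr fun g => Subtype.ext_iff
  calc (∀ x, a • x = 0)
    _ ↔ ∀ x, a • e x = 0 := forall_congr' fun x => by
      rw [← map_smul, LinearEquiv.map_eq_zero_iff]
    _ ↔ ∀ z : LinearMap.ker S.g.hom,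
          a • (Submodule.Quotient.mk z : _ ⧸ LinearMap.range S.moduleCatToCycles) = 0 :=
      (e.surjective.forall (p := fun x => a • x = 0)).symm.trans
        (Submodule.Quotient.mk_surjective _).forall
    _ ↔ _ := by
      simp_rw [boundary_iff]
      exact Subtype.forall

variable {M : Type u} [AddCommGroup M] [Module R M] {a : R}

theorem mem_freeFactorIdeal_of_smul_ext_one_eq_zero
    (h : ∀ N : ModuleCat.{u} R,
      ∀ x : ((Ext R (ModuleCat.{u} R) 1).obj (Opposite.op (ModuleCat.of R M))).obj N, a • x = 0) :
    a ∈ freeFactorIdeal R M := by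
  let P := projectiveResolution (ModuleCat.of R M)
  let π : P.complex.X 0 ⟶ ModuleCat.of R M := P.π.f 0
  have hexact : Function.Exact (P.complex.d 1 0).hom π.hom :=
    (ShortComplex.ShortExact.moduleCat_exact_iff_function_exact _).1 P.exact₀
  have hsurj : Function.Surjective π.hom :=
    (ModuleCat.epi_iff_surjective _).1 (inferInstanceAs (Epi (P.π.f 0)))
  have : Module.Projective R (P.complex.X 0) :=
    (IsProjective.iff_projective _).2 (P.projective 0)
  let f : P.complex.X 1 ⟶ ModuleCat.of R (LinearMap.ker π.hom) :=
    ModuleCat.ofHom ((P.complex.d 1 0).hom.codRestrict _ hexact.apply_apply_eq_zero)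
  have hf : P.complex.d 2 1 ≫ f = 0 := by
    ext x
    exact congr($(P.complex.d_comp_d 2 1 0).hom x)
  obtain ⟨g, hg⟩ := (smul_ext_succ_eq_zero_iff P a 0 _).1 (h _) f hf
  have hg' (x) : (g.hom ((P.complex.d 1 0).hom x) : P.complex.X 0) = a • (P.complex.d 1 0).hom x :=
    congr(Subtype.val ($(hg).hom x))
  exact sectionIdeal_le_freeFactorIdeal π.hom (mem_sectionIdeal_of_exact hexact hsurj hg')

theorem smul_ext_succ_eq_zero_of_mem_freeFactorIdeal (ha : a ∈ freeFactorIdeal R M) (n : ℕ)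
    (N : ModuleCat.{u} R)
    (x : ((Ext R (ModuleCat.{u} R) (n + 1)).obj (Opposite.op (ModuleCat.of R M))).obj N) :
    a • x = 0 := by
  obtain ⟨s, hs⟩ := ha
  let P := projectiveResolution (ModuleCat.of R M)
  have : Projective (ModuleCat.of R (M →₀ R)) :=
    (IsProjective.iff_projective _).1 inferInstance
  let Q := ProjectiveResolution.self (ModuleCat.of R (M →₀ R))
  let i : ModuleCat.of R M ⟶ ModuleCat.of R (M →₀ R) := ModuleCat.ofHom s
  let p : ModuleCat.of R (M →₀ R) ⟶ ModuleCat.of R M :=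
    ModuleCat.ofHom (Finsupp.linearCombination R id)
  have hip : i ≫ p = a • 𝟙 _ := ModuleCat.hom_ext hs
  let π : P.complex.X 0 ⟶ ModuleCat.of R M := P.π.f 0
  have hπ : (a • 𝟙 P.complex) ≫ P.π = P.π ≫ (ChainComplex.single₀ _).map (a • 𝟙 _) := by
    refine HomologicalComplex.to_single_hom_ext ?_
    rw [HomologicalComplex.comp_f, HomologicalComplex.comp_f, ChainComplex.single₀_map_f_zero]
    exact (by simp : (a • 𝟙 _) ≫ π = π ≫ (a • 𝟙 _))
  let φ : P.complex ⟶ Q.complex := ProjectiveResolution.lift i P Q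
  let ψ : Q.complex ⟶ P.complex := ProjectiveResolution.lift p Q P
  let H : Homotopy (a • 𝟙 P.complex) (φ ≫ ψ) :=
    ProjectiveResolution.liftHomotopy (a • 𝟙 _) _ _ hπ (by simp [φ, ψ, ← hip])
  have hH : a • 𝟙 (P.complex.X (n + 1)) =
      P.complex.d (n + 1) n ≫ H.hom n (n + 1) +
        H.hom (n + 1) (n + 2) ≫ P.complex.d (n + 2) (n + 1) := by
    have hQ : 𝟙 (Q.complex.X (n + 1)) = 0 :=
      (HomologicalComplex.isZero_single_obj_X _ 0 _ (n + 1) (by simp)).eq_of_src _ _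
    have hφψ : (φ ≫ ψ).f (n + 1) = 0 := by
      rw [HomologicalComplex.comp_f, ← Category.comp_id (φ.f _), hQ]
      simp
    simpa only [hφψ, add_zero, HomologicalComplex.smul_f_apply, HomologicalComplex.id_f,
      Homotopy.dNext_succ_chainComplex, Homotopy.prevD_chainComplex] using H.comm (n + 1)
  revert x
  refine (smul_ext_succ_eq_zero_iff P a n N).2 fun f hf => ⟨H.hom n (n + 1) ≫ f, ?_⟩
  calc P.complex.d (n + 1) n ≫ H.hom n (n + 1) ≫ f
    _ = (a • 𝟙 (P.complex.X (n + 1))) ≫ f := by simp [hH, hf]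
    _ = a • f := by simp

theorem isAlmostProjective_iff {V : Type v} [CommRing V] {m : Ideal V} [Algebra V R] :
    IsAlmostProjective V m R M ↔ m.map (algebraMap V R) ≤ freeFactorIdeal R M := by
  refine Ideal.map_le_iff_le_comap.symm.subst ⟨fun h a ha => ?_, fun h i hi N a ha x => ?_⟩
  · exact mem_freeFactorIdeal_of_smul_ext_one_eq_zero fun N => h 1 one_pos N a ha
  · obtain ⟨n, rfl⟩ := Nat.exists_eq_add_one.2 hi
    exact smul_ext_succ_eq_zero_of_mem_freeFactorIdeal (h ha) n N x

end Ext

section Nilpotent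

variable {R : Type*} [CommRing R] {I J : Ideal R}

theorem le_apply_bot_of_isNilpotent {𝔞 : Ideal R → Ideal R}
    (hmul : ∀ I₁ I₂, 𝔞 I₁ * 𝔞 I₂ ≤ 𝔞 (I₁ * I₂)) (hJ : J * J = J) (hI : IsNilpotent I)
    (h : J ≤ 𝔞 I) : J ≤ 𝔞 ⊥ := by
  obtain ⟨k, hk⟩ := hI
  have hpow (n : ℕ) : J ≤ 𝔞 (I ^ (n + 1)) := by
    induction n with
    | zero => simpa using h
    | succ n ih => exact hJ.ge.trans ((Ideal.mul_mono ih h).trans (hmul _ _))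
  simpa [pow_succ, hk] using hpow k

variable {M N : Type*} [AddCommGroup M] [Module R M] [AddCommGroup N] [Module R N]

theorem map_smul_top_le_mul_smul_top {I₁ I₂ : Ideal R} {f : M →ₗ[R] N}
    (hf : LinearMap.range f ≤ I₁ • ⊤) :
    (I₂ • (⊤ : Submodule R M)).map f ≤ (I₁ * I₂) • ⊤ := by
  rw [Submodule.map_smul'', Submodule.map_top, mul_comm, Submodule.mul_smul]
  exact Submodule.smul_mono le_rfl hf

theorem smul_mem_smul_of_mem_colon {K : Submodule R M} {a : R} (ha : a ∈ K.colon Set.univ) {x : M}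
    (hx : x ∈ I • (⊤ : Submodule R M)) : a • x ∈ I • K := by
  have hax : a • x ∈ (I • (⊤ : Submodule R M)).map (a • LinearMap.id) := ⟨x, hx, rfl⟩
  rw [Submodule.map_smul'', Submodule.map_top] at hax
  refine Submodule.smul_mono le_rfl ?_ hax
  rintro _ ⟨y, rfl⟩
  exact Submodule.mem_colon.1 ha y (Set.mem_univ y)

theorem colon_sup_smul_top_mul_le (K₁ K₂ : Submodule R M) (I₁ I₂ : Ideal R) :
    (K₁ ⊔ I₁ • ⊤ : Submodule R M).colon Set.univ * (K₂ ⊔ I₂ • ⊤ : Submodule R M).colon Set.univ ≤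
      (K₁ ⊔ K₂ ⊔ (I₁ * I₂) • ⊤ : Submodule R M).colon Set.univ := by
  refine Ideal.mul_le.2 fun a ha b hb => Submodule.mem_colon.2 fun x hx => ?_
  obtain ⟨y, hy, z, hz, hyz⟩ := Submodule.mem_sup.1 (Submodule.mem_colon.1 hb x hx)
  have haz : a • z ∈ K₁ ⊔ (I₁ * I₂) • ⊤ := by
    have hle : I₂ • (K₁ ⊔ I₁ • ⊤ : Submodule R M) ≤ K₁ ⊔ (I₁ * I₂) • ⊤ := by
      rw [Submodule.smul_sup, ← Submodule.mul_smul, mul_comm]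
      exact sup_le_sup_right Submodule.smul_le_right _
    exact hle (smul_mem_smul_of_mem_colon ha hz)
  rw [mul_smul a b x, ← hyz, smul_add, sup_right_comm, sup_comm]
  exact Submodule.add_mem_sup (Submodule.smul_mem _ _ hy) haz

theorem le_colon_of_le_colon_sup_smul_top (hJ : J * J = J) (hI : IsNilpotent I) {K : Submodule R M}
    (h : J ≤ (K ⊔ I • ⊤ : Submodule R M).colon Set.univ) : J ≤ K.colon Set.univ := by
  simpa using le_apply_bot_of_isNilpotent
    (𝔞 := fun I => (K ⊔ I • ⊤ : Submodule R M).colon Set.univ)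
    (fun I₁ I₂ => by simpa using colon_sup_smul_top_mul_le K K I₁ I₂) hJ hI h

/-- The ideal of scalars `a` for which `f` has a retraction up to `a` modulo `I`. -/
def retractionIdeal (I : Ideal R) (f : M →ₗ[R] N) : Ideal R where
  carrier := {a | ∃ r : N →ₗ[R] M, LinearMap.range (a • LinearMap.id - r ∘ₗ f) ≤ I • ⊤}
  zero_mem' := ⟨0, by simp⟩
  add_mem' := by
    rintro a b ⟨r, hr⟩ ⟨s, hs⟩
    refine ⟨r + s, ?_⟩
    rw [LinearMap.add_comp, add_smul, add_sub_add_comm]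
    exact (LinearMap.range_add_le _ _).trans (sup_le hr hs)
  smul_mem' := by
    rintro c a ⟨r, hr⟩
    refine ⟨c • r, ?_⟩
    rw [LinearMap.smul_comp, smul_eq_mul, mul_smul, ← smul_sub]
    rintro _ ⟨x, rfl⟩
    exact Submodule.smul_mem _ c (hr ⟨x, rfl⟩)

theorem mem_retractionIdeal_bot {f : M →ₗ[R] N} {a : R} :
    a ∈ retractionIdeal ⊥ f ↔ ∃ r : N →ₗ[R] M, r ∘ₗ f = a • LinearMap.id := by
  refine exists_congr fun r => ?_
  rw [Submodule.bot_smul, le_bot_iff, LinearMap.range_eq_bot, sub_eq_zero, eq_comm]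

theorem retractionIdeal_mul_le (I₁ I₂ : Ideal R) (f : M →ₗ[R] N) :
    retractionIdeal I₁ f * retractionIdeal I₂ f ≤ retractionIdeal (I₁ * I₂) f := by
  refine Ideal.mul_le.2 fun a ⟨r, hr⟩ b ⟨s, hs⟩ => ⟨a • s + b • r - r ∘ₗ f ∘ₗ s, ?_⟩
  have hcomp : (a * b) • LinearMap.id - (a • s + b • r - r ∘ₗ f ∘ₗ s) ∘ₗ f =
      (a • LinearMap.id - r ∘ₗ f) ∘ₗ (b • LinearMap.id - s ∘ₗ f) := by
    ext x
    simp only [LinearMap.sub_apply, LinearMap.add_apply, LinearMap.smul_apply,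
      LinearMap.comp_apply, LinearMap.id_apply, map_sub, map_smul]
    module
  rw [hcomp, LinearMap.range_comp]
  exact (Submodule.map_mono hs).trans (map_smul_top_le_mul_smul_top hr)

theorem le_retractionIdeal_bot (hJ : J * J = J) (hI : IsNilpotent I) {f : M →ₗ[R] N}
    (h : J ≤ retractionIdeal I f) : J ≤ retractionIdeal ⊥ f :=
  le_apply_bot_of_isNilpotent (fun I₁ I₂ => retractionIdeal_mul_le I₁ I₂ f) hJ hI h

theorem retractionIdeal_bot_le_sectionIdeal_mkQ (f : M →ₗ[R] N) :
    retractionIdeal ⊥ f ≤ sectionIdeal (LinearMap.range f).mkQ := by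
  intro a ha
  obtain ⟨r, hr⟩ := mem_retractionIdeal_bot.1 ha
  refine mem_sectionIdeal_of_exact (d := f)
    (g := (f ∘ₗ r).codRestrict _ fun x => by simp) (LinearMap.exact_iff.2 (Submodule.ker_mkQ _))
    (Submodule.mkQ_surjective _) fun x => ?_
  have hrx : r (f x) = a • x := LinearMap.congr_fun hr x
  simp [hrx]

variable (M) in
/-- The ideal of scalars `a` for which `a • M` lies, modulo `I`, in a finitely generated submodule.
It measures how far `M ⧸ I • M` is from being finitely generated. -/
def fgIdeal (I : Ideal R) : Ideal R where
  carrier := {a | ∃ K : Submodule R M, K.FG ∧ a ∈ (K ⊔ I • ⊤ : Submodule R M).colon Set.univ}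
  zero_mem' := ⟨⊥, Submodule.fg_bot, zero_mem _⟩
  add_mem' := by
    rintro a b ⟨K, hK, ha⟩ ⟨L, hL, hb⟩
    refine ⟨K ⊔ L, hK.sup hL, add_mem ?_ ?_⟩
    · exact Submodule.colon_mono (sup_le_sup_right le_sup_left _) subset_rfl ha
    · exact Submodule.colon_mono (sup_le_sup_right le_sup_right _) subset_rfl hb
  smul_mem' := by
    rintro c a ⟨K, hK, ha⟩
    exact ⟨K, hK, Submodule.smul_mem _ c ha⟩

theorem mem_fgIdeal_bot {a : R} :
    a ∈ fgIdeal M ⊥ ↔ ∃ K : Submodule R M, K.FG ∧ ∀ x, a • x ∈ K := by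
  refine exists_congr fun K => ?_
  simp [Submodule.mem_colon]

theorem fgIdeal_mul_le (I₁ I₂ : Ideal R) : fgIdeal M I₁ * fgIdeal M I₂ ≤ fgIdeal M (I₁ * I₂) :=
  Ideal.mul_le.2 fun _ ⟨K, hK, ha⟩ _ ⟨L, hL, hb⟩ =>
    ⟨K ⊔ L, hK.sup hL, colon_sup_smul_top_mul_le K L I₁ I₂ (Ideal.mul_mem_mul ha hb)⟩

theorem le_fgIdeal_bot (hJ : J * J = J) (hI : IsNilpotent I) (h : J ≤ fgIdeal M I) :
    J ≤ fgIdeal M ⊥ :=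
  le_apply_bot_of_isNilpotent fgIdeal_mul_le hJ hI h

end Nilpotent

section Reduction

variable {R : Type*} [CommRing R] {I J : Ideal R}
  {P Q P' : Type*} [AddCommGroup P] [Module R P] [AddCommGroup Q] [Module R Q]
  [AddCommGroup P'] [Module R P']

/-- `σ : P → P'` is an almost reduction modulo `I` if `J` annihilates the cokernel of `σ` and maps
its kernel into `I • P`. If `I • P' = 0`, this says that the induced map `P ⧸ I • P → P'` is an
almost isomorphism. -/
structure IsAlmostReduction (J I : Ideal R) (σ : P →ₗ[R] P') : Prop where
  le_colon_ker : J ≤ (I • ⊤ : Submodule R P).colon (LinearMap.ker σ)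
  le_colon_range : J ≤ (LinearMap.range σ).colon Set.univ

theorem freeFactorIdeal_mul_colon_range_le {j : Q →ₗ[R] P} (hj : Function.Injective j) :
    freeFactorIdeal R P * (LinearMap.range j).colon Set.univ ≤ freeFactorIdeal R Q := by
  refine Ideal.mul_le.2 fun a ⟨s, hs⟩ b hb => ?_
  obtain ⟨p, hp⟩ := exists_comp_eq_of_forall_mem_range j
    (b • Finsupp.linearCombination R (id : P → P))
    fun x => Submodule.mem_colon.1 hb _ (Set.mem_univ _)
  refine sectionIdeal_le_freeFactorIdeal p ⟨s ∘ₗ j, LinearMap.ext fun x => hj ?_⟩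
  have hjp (y) : j (p y) = b • Finsupp.linearCombination R id y := LinearMap.congr_fun hp y
  have hsx : Finsupp.linearCombination R id (s (j x)) = a • j x := LinearMap.congr_fun hs (j x)
  simp [hjp, hsx, smul_smul, mul_comm]

theorem exists_fg_map_eq {f : P →ₗ[R] Q} (hf : Function.Surjective f) {K : Submodule R Q}
    (hK : K.FG) : ∃ L : Submodule R P, L.FG ∧ L.map f = K := by
  obtain ⟨n, g, rfl⟩ := (Submodule.fg_iff_exists_fin_linearMap R Q).1 hK
  obtain ⟨h, rfl⟩ := Module.projective_lifting_property f g hf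
  exact ⟨LinearMap.range h, Submodule.fg_range h, (LinearMap.range_comp h f).symm⟩

theorem colon_range_mul_fgIdeal_le (f : P →ₗ[R] Q) :
    (LinearMap.range f).colon Set.univ * fgIdeal Q ⊥ ≤ fgIdeal (LinearMap.range f) ⊥ := by
  refine Ideal.mul_le.2 fun a ha b hb => mem_fgIdeal_bot.2 ?_
  obtain ⟨K, hK, hbK⟩ := mem_fgIdeal_bot.1 hb
  let g : Q →ₗ[R] LinearMap.range f :=
    (a • LinearMap.id).codRestrict _ fun x => Submodule.mem_colon.1 ha x (Set.mem_univ x)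
  exact ⟨K.map g, hK.map g, fun y => ⟨b • y, hbK y, Subtype.ext (mul_smul a b _).symm⟩⟩

namespace IsAlmostReduction

variable {σ : P →ₗ[R] P'}

theorem comp_injective (hσ : IsAlmostReduction J I σ) (hJ : J * J = J) {j : Q →ₗ[R] P}
    (hj : Function.Injective j) (hrange : J ≤ (LinearMap.range j).colon Set.univ) :
    IsAlmostReduction J I (σ ∘ₗ j) where
  le_colon_ker := by
    refine hJ.ge.trans (Ideal.mul_le.2 fun a ha b hb => Submodule.mem_colon.2 fun x hx => ?_)
    have hbx : b • j x ∈ I • (⊤ : Submodule R P) :=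
      Submodule.mem_colon.1 (hσ.le_colon_ker hb) (j x) hx
    have habx : j ((a * b) • x) ∈ (I • (⊤ : Submodule R Q)).map j := by
      rw [Submodule.map_smul'', Submodule.map_top, map_smul, mul_smul]
      exact smul_mem_smul_of_mem_colon (hrange ha) hbx
    exact (hj.mem_set_image).1 habx
  le_colon_range := by
    refine hJ.ge.trans (Ideal.mul_le.2 fun a ha b hb => Submodule.mem_colon.2 fun y hy => ?_)
    obtain ⟨x, hx⟩ := Submodule.mem_colon.1 (hσ.le_colon_range hb) y hy
    obtain ⟨q, hq⟩ := Submodule.mem_colon.1 (hrange ha) x (Set.mem_univ x)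
    exact ⟨q, by rw [LinearMap.comp_apply, hq, map_smul, hx, mul_smul]⟩

theorem mul_mem_colon_sup (hσ : IsAlmostReduction J I σ) {K : Submodule R P} {a b : R} (ha : a ∈ J)
    (hb : ∀ x, b • σ x ∈ K.map σ) : a * b ∈ (K ⊔ I • ⊤ : Submodule R P).colon Set.univ := by
  refine Submodule.mem_colon.2 fun x _ => ?_
  obtain ⟨y, hy, hyx⟩ := hb x
  have hker : b • x - y ∈ LinearMap.ker σ := by simp [hyx]
  rw [mul_smul, ← add_sub_cancel y (b • x), smul_add]
  exact Submodule.add_mem_sup (K.smul_mem a hy)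
    (Submodule.mem_colon.1 (hσ.le_colon_ker ha) _ hker)

theorem mul_mem_fgIdeal (hσ : IsAlmostReduction J I σ) {a b : R} (ha : a ∈ J)
    (hb : b ∈ fgIdeal (LinearMap.range σ) ⊥) : a * b ∈ fgIdeal P I := by
  obtain ⟨K, hK, hbK⟩ := mem_fgIdeal_bot.1 hb
  obtain ⟨L, hL, rfl⟩ := exists_fg_map_eq σ.surjective_rangeRestrict hK
  refine ⟨L, hL, hσ.mul_mem_colon_sup ha fun x => ?_⟩
  obtain ⟨y, hy, hyx⟩ := hbK ⟨σ x, x, rfl⟩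
  exact ⟨y, hy, congr(Subtype.val $hyx)⟩

theorem le_fgIdeal_bot (hσ : IsAlmostReduction J I σ) (hJ : J * J = J) (hI : IsNilpotent I)
    (h : J ≤ fgIdeal P' ⊥) : J ≤ fgIdeal P ⊥ := by
  have hrange : J ≤ fgIdeal (LinearMap.range σ) ⊥ :=
    hJ.ge.trans ((Ideal.mul_mono hσ.le_colon_range h).trans (colon_range_mul_fgIdeal_le σ))
  exact _root_.le_fgIdeal_bot hJ hI <|
    hJ.ge.trans <| Ideal.mul_le.2 fun a ha b hb => hσ.mul_mem_fgIdeal ha (hrange hb)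

/-- The kernel of an almost reduction is controlled by `I`, so by nilpotence preimages of generators
of its image almost generate `P`; they form a small set. -/
theorem exists_small {R : Type u} [CommRing R] {I J : Ideal R} {P : Type*} {P' : Type u}
    [AddCommGroup P] [Module R P] [AddCommGroup P'] [Module R P'] {σ : P →ₗ[R] P'}
    (hσ : IsAlmostReduction J I σ) (hJ : J * J = J) (hI : IsNilpotent I)
    (hP : J ≤ freeFactorIdeal R P) :
    ∃ (Q : Type u) (_ : AddCommGroup Q) (_ : Module R Q) (τ : Q →ₗ[R] P'),
      J ≤ freeFactorIdeal R Q ∧ IsAlmostReduction J I τ := by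
  choose g hg using fun y : LinearMap.range σ => y.2
  let Q : Submodule R P := Submodule.span R (Set.range g)
  have : Small.{u} Q := Submodule.small_span _
  let j : Shrink.{u} Q →ₗ[R] P := Q.subtype ∘ₗ (Shrink.linearEquiv R Q).toLinearMap
  have hj : Function.Injective j := Q.injective_subtype.comp (Shrink.linearEquiv R Q).injective
  have hrange : J ≤ (LinearMap.range j).colon Set.univ := by
    rw [LinearMap.range_comp_of_range_eq_top _ (LinearEquiv.range _), Submodule.range_subtype]
    refine le_colon_of_le_colon_sup_smul_top hJ hI fun a ha => ?_
    have hQ (x) : (1 : R) • σ x ∈ Q.map σ :=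
      ⟨g ⟨σ x, x, rfl⟩, Submodule.subset_span ⟨_, rfl⟩, by simp [hg]⟩
    simpa using hσ.mul_mem_colon_sup ha hQ
  exact ⟨Shrink.{u} Q, inferInstance, inferInstance, σ ∘ₗ j,
    hJ.ge.trans ((Ideal.mul_mono hP hrange).trans (freeFactorIdeal_mul_colon_range_le hj)),
    hσ.comp_injective hJ hj hrange⟩

end IsAlmostReduction

end Reduction

section FinitePresentation

variable {R : Type*} [CommRing R] {P : Type*} [AddCommGroup P] [Module R P]

theorem exists_fg_forall_mem_sectionIdeal {a : R}
    (ha : a ∈ fgIdeal P ⊥ * freeFactorIdeal R P) :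
    ∃ K : Submodule R P, K.FG ∧
      ∀ (n : ℕ) (φ : (Fin n → R) →ₗ[R] P), K ≤ LinearMap.range φ → a ∈ sectionIdeal φ := by
  refine Submodule.mul_induction_on ha (fun b hb c ⟨s, hs⟩ => ?_) ?_
  · obtain ⟨K, hK, hbK⟩ := mem_fgIdeal_bot.1 hb
    refine ⟨K, hK, fun n φ hφ => ?_⟩
    obtain ⟨g, hg⟩ := exists_comp_eq_of_forall_mem_range φ
      (b • Finsupp.linearCombination R (id : P → P)) fun x => hφ (hbK _)
    exact ⟨g ∘ₗ s, by rw [← LinearMap.comp_assoc, hg, LinearMap.smul_comp, hs, smul_smul]⟩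
  · rintro b c ⟨K, hK, hb⟩ ⟨L, hL, hc⟩
    exact ⟨K ⊔ L, hK.sup hL, fun n φ hφ =>
      add_mem (hb n φ (le_sup_left.trans hφ)) (hc n φ (le_sup_right.trans hφ))⟩

theorem exists_almost_presentation {ε δ : R} (hε : ε ∈ fgIdeal P ⊥)
    (hδ : δ ∈ fgIdeal P ⊥ * freeFactorIdeal R P) :
    ∃ (n : ℕ) (ψ : (Fin n → R) →ₗ[R] (Fin n → R)) (φ : (Fin n → R) →ₗ[R] P),
      φ ∘ₗ ψ = 0 ∧ (∀ x, ε • x ∈ LinearMap.range φ) ∧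
        ∀ y ∈ LinearMap.ker φ, δ • y ∈ LinearMap.range ψ := by
  obtain ⟨K, hK, hεK⟩ := mem_fgIdeal_bot.1 hε
  obtain ⟨L, hL, hδL⟩ := exists_fg_forall_mem_sectionIdeal hδ
  obtain ⟨n, φ, hφ⟩ := (Submodule.fg_iff_exists_fin_linearMap R P).1 (hK.sup hL)
  obtain ⟨s, hs⟩ := hδL n φ (hφ ▸ le_sup_right)
  refine ⟨n, δ • LinearMap.id - s ∘ₗ φ, φ, ?_, fun x => ?_, fun y hy => ⟨y, ?_⟩⟩
  · rw [LinearMap.comp_sub, ← LinearMap.comp_assoc, hs, LinearMap.comp_smul, LinearMap.smul_comp,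
      LinearMap.comp_id, LinearMap.id_comp, sub_self]
  · exact hφ ▸ Submodule.mem_sup_left (hεK x)
  · simp [LinearMap.mem_ker.1 hy]

end FinitePresentation

section AlmostFP

variable {V : Type v} [CommRing V] {m : Ideal V} {R : Type u} [CommRing R] [Algebra V R]

theorem map_le_fgIdeal_of_isAlmostFP {M : Type u} [AddCommGroup M] [Module R M]
    (h : IsAlmostFP V m R M) : m.map (algebraMap V R) ≤ fgIdeal M ⊥ := by
  refine Ideal.map_le_iff_le_comap.2 fun a ha => mem_fgIdeal_bot.2 ?_
  obtain ⟨n, -, -, φ, hφ, -⟩ := h a ha a ha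
  exact ⟨LinearMap.range φ, Submodule.fg_range φ, hφ⟩

theorem isAlmostFP_of_map_le {P : Type u} [AddCommGroup P] [Module R P] (hm : m * m = m)
    (hfg : m.map (algebraMap V R) ≤ fgIdeal P ⊥)
    (hfree : m.map (algebraMap V R) ≤ freeFactorIdeal R P) : IsAlmostFP V m R P := by
  intro ε hε δ hδ
  have hδ' : algebraMap V R δ ∈ fgIdeal P ⊥ * freeFactorIdeal R P := by
    refine Ideal.mul_mono hfg hfree ?_
    rw [← Ideal.map_mul, hm]
    exact Ideal.mem_map_of_mem _ hδ
  obtain ⟨n, ψ, φ, -, hε, hδ⟩ :=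
    exists_almost_presentation (hfg (Ideal.mem_map_of_mem _ hε)) hδ'
  exact ⟨n, n, ψ, φ, hε, hδ⟩

theorem map_fgIdeal_le_of_surjective {R' : Type*} [CommRing R'] [Algebra R R']
    (hsurj : Function.Surjective (algebraMap R R')) {M : Type*} [AddCommGroup M] [Module R' M]
    [Module R M] [IsScalarTower R R' M] {J : Ideal R}
    (h : J.map (algebraMap R R') ≤ fgIdeal M ⊥) : J ≤ fgIdeal M ⊥ := by
  refine (Ideal.map_le_iff_le_comap.1 h).trans fun a ha => mem_fgIdeal_bot.2 ?_
  obtain ⟨K, hK, haK⟩ := mem_fgIdeal_bot.1 ha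
  exact ⟨K.restrictScalars R, hK.restrictScalars_of_surjective hsurj, fun x => by
    simpa [algebraMap_smul] using haK x⟩

end AlmostFP

section Contraction

variable {R : Type*} [CommRing R] {A B C : Type*} [AddCommGroup A] [Module R A]
  [AddCommGroup B] [Module R B] [AddCommGroup C] [Module R C]

/-- The ideal of scalars that are null-homotopic on the sequence `0 → A → B → C → 0` formed by `d`
and `e`. It measures how far that sequence is from being split exact. -/
def contractionIdeal (d : A →ₗ[R] B) (e : B →ₗ[R] C) : Ideal R where
  carrier := {a | ∃ (s : B →ₗ[R] A) (t : C →ₗ[R] B), s ∘ₗ d = a • LinearMap.id ∧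
    d ∘ₗ s + t ∘ₗ e = a • LinearMap.id ∧ e ∘ₗ t = a • LinearMap.id}
  zero_mem' := ⟨0, 0, by simp, by simp, by simp⟩
  add_mem' := by
    rintro a b ⟨s, t, hsd, hst, het⟩ ⟨s', t', hsd', hst', het'⟩
    refine ⟨s + s', t + t', ?_, ?_, ?_⟩
    · rw [LinearMap.add_comp, hsd, hsd', add_smul]
    · rw [LinearMap.add_comp, LinearMap.comp_add, add_add_add_comm, hst, hst', add_smul]
    · rw [LinearMap.comp_add, het, het', add_smul]
  smul_mem' := by
    rintro c a ⟨s, t, hsd, hst, het⟩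
    refine ⟨c • s, c • t, ?_, ?_, ?_⟩
    · rw [LinearMap.smul_comp, hsd, smul_smul, smul_eq_mul]
    · rw [LinearMap.smul_comp, LinearMap.comp_smul, ← smul_add, hst, smul_smul, smul_eq_mul]
    · rw [LinearMap.comp_smul, het, smul_smul, smul_eq_mul]

theorem sectionIdeal_le_contractionIdeal (p : B →ₗ[R] C) :
    sectionIdeal p ≤ contractionIdeal (LinearMap.ker p).subtype p := by
  rintro a ⟨t, ht⟩
  have hpt (y) : p (t y) = a • y := LinearMap.congr_fun ht y
  let s : B →ₗ[R] LinearMap.ker p :=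
    (a • LinearMap.id - t ∘ₗ p).codRestrict _ fun x => by simp [hpt]
  exact ⟨s, t, by ext; simp [s], by ext; simp [s], ht⟩

theorem le_contractionIdeal_restrictScalars {S : Type*} [CommRing S] [Algebra R S] [Module S A]
    [IsScalarTower R S A] [Module S B] [IsScalarTower R S B] [Module S C] [IsScalarTower R S C]
    {d : A →ₗ[S] B} {e : B →ₗ[S] C} {J : Ideal R}
    (h : J.map (algebraMap R S) ≤ contractionIdeal d e) :
    J ≤ contractionIdeal (d.restrictScalars R) (e.restrictScalars R) := by
  refine (Ideal.map_le_iff_le_comap.1 h).trans fun a ⟨s, t, hsd, hst, het⟩ =>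
    ⟨s.restrictScalars R, t.restrictScalars R, ?_, ?_, ?_⟩
  · exact LinearMap.ext fun x => (LinearMap.congr_fun hsd x).trans (algebraMap_smul S a x)
  · exact LinearMap.ext fun x => (LinearMap.congr_fun hst x).trans (algebraMap_smul S a x)
  · exact LinearMap.ext fun x => (LinearMap.congr_fun het x).trans (algebraMap_smul S a x)

variable {I J : Ideal R} {d : A →ₗ[R] B} {e : B →ₗ[R] C}
  {L₁ L₀ : Type*} [AddCommGroup L₁] [Module R L₁] [AddCommGroup L₀] [Module R L₀]
  {q₁ : L₁ →ₗ[R] A} {q₀ : L₀ →ₗ[R] B} {D : L₁ →ₗ[R] L₀}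

theorem contractionIdeal_le_retractionIdeal [Module.Projective R L₀]
    (hq₁ : Function.Surjective q₁) (hker : LinearMap.ker q₁ ≤ I • ⊤) (hD : q₀ ∘ₗ D = d ∘ₗ q₁) :
    contractionIdeal d e ≤ retractionIdeal I D := by
  rintro a ⟨s, t, hsd, -, -⟩
  obtain ⟨r, hr⟩ := Module.projective_lifting_property q₁ (s ∘ₗ q₀) hq₁
  refine ⟨r, LinearMap.range_le_iff_comap.2 <| eq_top_iff.2 fun x _ => hker ?_⟩
  have hrx : q₁ (r (D x)) = s (q₀ (D x)) := LinearMap.congr_fun hr (D x)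
  have hDx : q₀ (D x) = d (q₁ x) := LinearMap.congr_fun hD x
  have hsx : s (d (q₁ x)) = a • q₁ x := LinearMap.congr_fun hsd (q₁ x)
  simp [hrx, hDx, hsx]

theorem isAlmostReduction_liftQ (hq₁ : Function.Surjective q₁) (hq₀ : Function.Surjective q₀)
    (hker : LinearMap.ker q₀ ≤ I • ⊤) (hD : q₀ ∘ₗ D = d ∘ₗ q₁) (h : J ≤ contractionIdeal d e)
    (hle : LinearMap.range D ≤ LinearMap.ker (e ∘ₗ q₀)) :
    IsAlmostReduction J I ((LinearMap.range D).liftQ (e ∘ₗ q₀) hle) where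
  le_colon_ker a ha := Submodule.mem_colon.2 fun x hx => by
    obtain ⟨s, t, -, hst, -⟩ := h ha
    obtain ⟨z, rfl⟩ := (LinearMap.range D).mkQ_surjective x
    obtain ⟨w, hw⟩ := hq₁ (s (q₀ z))
    have hez : e (q₀ z) = 0 := hx
    have hDw : q₀ (D w) = d (q₁ w) := LinearMap.congr_fun hD w
    have hz : d (s (q₀ z)) + t (e (q₀ z)) = a • q₀ z := LinearMap.congr_fun hst (q₀ z)
    have hmem : a • z - D w ∈ I • (⊤ : Submodule R L₀) :=
      hker (by rw [LinearMap.mem_ker, map_sub, map_smul, ← hz, hez, map_zero, hDw, hw]; simp)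
    have hDw0 : (LinearMap.range D).mkQ (D w) = 0 :=
      (Submodule.Quotient.mk_eq_zero _).2 ⟨w, rfl⟩
    have hmk : a • (LinearMap.range D).mkQ z = (LinearMap.range D).mkQ (a • z - D w) := by
      rw [map_sub, map_smul, hDw0, sub_zero]
    rw [hmk]
    exact Submodule.smul_top_le_comap_smul_top I _ hmem
  le_colon_range a ha := Submodule.mem_colon.2 fun y _ => by
    obtain ⟨s, t, -, -, het⟩ := h ha
    obtain ⟨z, hz⟩ := hq₀ (t y)
    refine ⟨(LinearMap.range D).mkQ z, ?_⟩
    have hty : e (t y) = a • y := LinearMap.congr_fun het y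
    simp [hz, hty]

theorem exists_isAlmostReduction_of_contraction {L₁ : Type*} {L₀ : Type w} [AddCommGroup L₁]
    [Module R L₁] [AddCommGroup L₀] [Module R L₀] [Module.Projective R L₁] [Module.Projective R L₀]
    {q₁ : L₁ →ₗ[R] A} {q₀ : L₀ →ₗ[R] B} (hJ : J * J = J) (hI : IsNilpotent I)
    (hed : e ∘ₗ d = 0) (h : J ≤ contractionIdeal d e)
    (hq₁ : Function.Surjective q₁) (hker₁ : LinearMap.ker q₁ ≤ I • ⊤)
    (hq₀ : Function.Surjective q₀) (hker₀ : LinearMap.ker q₀ ≤ I • ⊤) :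
    ∃ (P : Type w) (_ : AddCommGroup P) (_ : Module R P) (σ : P →ₗ[R] C),
      J ≤ freeFactorIdeal R P ∧ IsAlmostReduction J I σ := by
  obtain ⟨D, hD⟩ := Module.projective_lifting_property q₀ (d ∘ₗ q₁) hq₀
  have hle : LinearMap.range D ≤ LinearMap.ker (e ∘ₗ q₀) := by
    rw [LinearMap.range_le_ker_iff, LinearMap.comp_assoc, hD, ← LinearMap.comp_assoc, hed,
      LinearMap.zero_comp]
  refine ⟨L₀ ⧸ LinearMap.range D, inferInstance, inferInstance, _, ?_,
    isAlmostReduction_liftQ hq₁ hq₀ hker₀ hD h hle⟩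
  calc J
    _ ≤ retractionIdeal ⊥ D := le_retractionIdeal_bot hJ hI <|
      h.trans (contractionIdeal_le_retractionIdeal hq₁ hker₁ hD)
    _ ≤ sectionIdeal (LinearMap.range D).mkQ := retractionIdeal_bot_le_sectionIdeal_mkQ D
    _ ≤ freeFactorIdeal R (L₀ ⧸ LinearMap.range D) := sectionIdeal_le_freeFactorIdeal _

end Contraction

section ProjectiveLift

variable {R : Type*} [CommRing R] {I : Ideal R} {L : Type w} {G A : Type*} [AddCommGroup L]
  [Module R L] [AddCommGroup G] [Module R G] [AddCommGroup A] [Module R A]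

theorem isNilpotent_of_range_le_smul_top (hI : IsNilpotent I) {f : Module.End R L}
    (hf : LinearMap.range f ≤ I • ⊤) : IsNilpotent f := by
  obtain ⟨k, hk⟩ := hI
  have hpow (n : ℕ) : LinearMap.range (f ^ n) ≤ (I ^ n) • ⊤ := by
    induction n with
    | zero => simp
    | succ n ih =>
      rw [pow_succ', pow_succ', Module.End.mul_eq_comp, LinearMap.range_comp]
      exact (Submodule.map_mono ih).trans (map_smul_top_le_mul_smul_top hf)
  exact ⟨k, LinearMap.range_eq_bot.1 (by simpa [hk] using hpow k)⟩

theorem exists_isIdempotentElem_comp_eq [Module.Projective R L] (hI : IsNilpotent I)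
    {q : L →ₗ[R] G} (hq : Function.Surjective q) (hker : LinearMap.ker q ≤ I • ⊤)
    {e : Module.End R G} (he : IsIdempotentElem e) :
    ∃ E : Module.End R L, IsIdempotentElem E ∧ q ∘ₗ E = e ∘ₗ q := by
  let C : Subring (Module.End R L × Module.End R G) :=
    { carrier := {x | q ∘ₗ x.1 = x.2 ∘ₗ q}
      zero_mem' := by simp
      one_mem' := rfl
      add_mem' := fun {x y} hx hy => by
        rw [Set.mem_ofPred_eq] at hx hy ⊢
        rw [Prod.fst_add, Prod.snd_add, LinearMap.comp_add, LinearMap.add_comp, hx, hy]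
      neg_mem' := fun {x} hx => by
        rw [Set.mem_ofPred_eq] at hx ⊢
        rw [Prod.fst_neg, Prod.snd_neg, LinearMap.comp_neg, LinearMap.neg_comp, hx]
      mul_mem' := fun {x y} hx hy => by
        rw [Set.mem_ofPred_eq] at hx hy ⊢
        rw [Prod.fst_mul, Prod.snd_mul, Module.End.mul_eq_comp, Module.End.mul_eq_comp,
          ← LinearMap.comp_assoc, hx, LinearMap.comp_assoc, hy, LinearMap.comp_assoc] }
  let f : C →+* Module.End R G := (RingHom.snd _ _).comp C.subtype
  have hnil : ∀ x ∈ RingHom.ker f, IsNilpotent x := by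
    rintro ⟨⟨E, e⟩, hE⟩ hx
    obtain rfl : e = 0 := hx
    obtain ⟨n, hn⟩ := isNilpotent_of_range_le_smul_top hI (f := E)
      ((LinearMap.range_le_ker_iff.2 (hE.trans (LinearMap.zero_comp q))).trans hker)
    exact ⟨n + 1, Subtype.ext (Prod.ext (by simp [pow_succ, hn]) (by simp))⟩
  obtain ⟨E, hE⟩ := Module.projective_lifting_property q (e ∘ₗ q) hq
  obtain ⟨⟨⟨E', e'⟩, hE'⟩, hidem, rfl⟩ :=
    exists_isIdempotentElem_eq_of_ker_isNilpotent f hnil e ⟨⟨(E, e), hE⟩, rfl⟩ he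
  exact ⟨E', congr($(hidem).1.1), hE'⟩

theorem exists_projective_of_comp_eq_id [Module.Projective R L] (hI : IsNilpotent I)
    {q : L →ₗ[R] G} (hq : Function.Surjective q) (hker : LinearMap.ker q ≤ I • ⊤)
    {p : G →ₗ[R] A} {s : A →ₗ[R] G} (hps : p ∘ₗ s = LinearMap.id) :
    ∃ (K : Type w) (_ : AddCommGroup K) (_ : Module R K) (r : K →ₗ[R] A),
      Module.Projective R K ∧ Function.Surjective r ∧ LinearMap.ker r ≤ I • ⊤ := by
  have hps' (x) : p (s x) = x := LinearMap.congr_fun hps x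
  obtain ⟨E, hE, hqE⟩ := exists_isIdempotentElem_comp_eq hI hq hker (e := s ∘ₗ p)
    (LinearMap.ext fun x => by simp [hps'])
  have hEE (x) : E (E x) = E x := LinearMap.congr_fun hE x
  have hqE' (x) : q (E x) = s (p (q x)) := LinearMap.congr_fun hqE x
  have hsplit : E.rangeRestrict ∘ₗ (LinearMap.range E).subtype = LinearMap.id := by
    ext ⟨_, x, rfl⟩
    exact hEE x
  refine ⟨LinearMap.range E, inferInstance, inferInstance,
    p ∘ₗ q ∘ₗ (LinearMap.range E).subtype, .of_split _ _ hsplit, fun a => ?_, ?_⟩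
  · obtain ⟨x, hx⟩ := hq (s a)
    exact ⟨⟨E x, x, rfl⟩, by simp [hqE', hx, hps']⟩
  · intro x hx
    have hpx : p (q x) = 0 := hx
    obtain ⟨y, hy⟩ := x.2
    have hqx : q x = 0 := by rw [← hy, ← hEE, hqE', hy, hpx, map_zero]
    have hEx : E.rangeRestrict x = x := LinearMap.congr_fun hsplit x
    rw [← hEx]
    exact Submodule.smul_top_le_comap_smul_top I E.rangeRestrict (hker hqx)

variable {S : Type*} [CommRing S] [Algebra R S]

theorem ker_mapRange_algebraLinearMap_le (ι : Type*) :
    LinearMap.ker (Finsupp.mapRange.linearMap (α := ι) (Algebra.linearMap R S)) ≤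
      RingHom.ker (algebraMap R S) • ⊤ := by
  intro x hx
  rw [← Finsupp.sum_single x]
  refine Submodule.sum_mem _ fun i _ => ?_
  have hxi : x i ∈ RingHom.ker (algebraMap R S) := DFunLike.congr_fun hx i
  rw [← mul_one (x i), ← smul_eq_mul, ← Finsupp.smul_single]
  exact Submodule.smul_mem_smul hxi trivial

theorem exists_projective_of_isNilpotent_ker {R : Type w} [CommRing R] {S : Type*} [CommRing S]
    [Algebra R S] (hsurj : Function.Surjective (algebraMap R S))
    (hI : IsNilpotent (RingHom.ker (algebraMap R S))) (A : Type v) [AddCommGroup A] [Module S A]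
    [Module R A] [IsScalarTower R S A] [Module.Projective S A] :
    ∃ (K : Type (max v w)) (_ : AddCommGroup K) (_ : Module R K) (r : K →ₗ[R] A),
      Module.Projective R K ∧ Function.Surjective r ∧
        LinearMap.ker r ≤ RingHom.ker (algebraMap R S) • ⊤ := by
  obtain ⟨s, hs⟩ := Module.projective_lifting_property
    (Finsupp.linearCombination S (id : A → A)) LinearMap.id
    (Finsupp.linearCombination_id_surjective S A)
  have hps : (Finsupp.linearCombination S id).restrictScalars R ∘ₗ s.restrictScalars R =
      LinearMap.id :=
    LinearMap.ext fun x => LinearMap.congr_fun hs x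
  let q : (A →₀ R) →ₗ[R] (A →₀ S) := Finsupp.mapRange.linearMap (Algebra.linearMap R S)
  have hq : Function.Surjective q := Finsupp.mapRange_surjective _ (map_zero _) hsurj
  exact exists_projective_of_comp_eq_id hI hq (ker_mapRange_algebraLinearMap_le A) hps

end ProjectiveLift

section InverseModulo

variable {R : Type*} [CommRing R] {J : Ideal R} {P₁ P₀ X Y X' Y' : Type*} [AddCommGroup P₁]
  [Module R P₁] [AddCommGroup P₀] [Module R P₀] [AddCommGroup X] [Module R X] [AddCommGroup Y]
  [Module R Y] [AddCommGroup X'] [Module R X'] [AddCommGroup Y'] [Module R Y']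

/-- The linear maps `f` and `g` are mutually inverse modulo `J`. -/
structure IsInverseModulo (J : Ideal R) (f : P₁ →ₗ[R] P₀) (g : P₀ →ₗ[R] P₁) : Prop where
  left (x : P₁) : g (f x) - x ∈ J • (⊤ : Submodule R P₁)
  right (y : P₀) : f (g y) - y ∈ J • (⊤ : Submodule R P₀)

theorem baseChange_mem_map_smul_top {h : P₁ →ₗ[R] P₀} (hh : ∀ x, h x ∈ J • (⊤ : Submodule R P₀))
    (S : Type*) [CommRing S] [Algebra R S] (x : S ⊗[R] P₁) :
    h.baseChange S x ∈ J.map (algebraMap R S) • (⊤ : Submodule S (S ⊗[R] P₀)) := by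
  induction x with
  | zero => simp
  | add x y hx hy => exact map_add (h.baseChange S) x y ▸ add_mem hx hy
  | tmul s x =>
    rw [← Submodule.restrictScalars_mem R, Ideal.smul_restrictScalars]
    exact Submodule.smul_top_le_comap_smul_top J (TensorProduct.mk R S P₀ s) (hh x)

namespace IsInverseModulo

theorem baseChange {f : P₁ →ₗ[R] P₀} {g : P₀ →ₗ[R] P₁} (h : IsInverseModulo J f g) (S : Type*)
    [CommRing S] [Algebra R S] :
    IsInverseModulo (J.map (algebraMap R S)) (f.baseChange S) (g.baseChange S) where
  left x := by
    have hx := baseChange_mem_map_smul_top (h := g ∘ₗ f - LinearMap.id) h.left S x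
    rwa [LinearMap.baseChange_sub, LinearMap.baseChange_comp, LinearMap.baseChange_id] at hx
  right y := by
    have hy := baseChange_mem_map_smul_top (h := f ∘ₗ g - LinearMap.id) h.right S y
    rwa [LinearMap.baseChange_sub, LinearMap.baseChange_comp, LinearMap.baseChange_id] at hy

variable {ι : P₁ →ₗ[R] P₀} {G : P₀ →ₗ[R] P₁}

theorem exists_comp_eq [Module.Projective R P₀] (h : IsInverseModulo J ι G) {β : Y →ₗ[R] Y'}
    (hβ : J • ⊤ ≤ LinearMap.range β) {w : P₀ →ₗ[R] Y'}
    (hw : LinearMap.range (w ∘ₗ ι) ≤ LinearMap.range β) : ∃ v : P₀ →ₗ[R] Y, β ∘ₗ v = w := by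
  refine exists_comp_eq_of_forall_mem_range β w fun z => ?_
  have hdiff : w (ι (G z) - z) ∈ LinearMap.range β :=
    hβ (Submodule.smul_top_le_comap_smul_top J w (h.right z))
  rw [← sub_sub_cancel (w (ι (G z))) (w z), ← map_sub]
  exact sub_mem (hw ⟨G z, rfl⟩) hdiff

theorem exists_comp_sub_comp_eq [Module.Projective R P₁] (h : IsInverseModulo J ι G)
    {r : X →ₗ[R] Y} {M : Submodule R X} {N : Submodule R Y} (hMN : J • N ≤ M.map r)
    {δ : P₁ →ₗ[R] Y} (hδ : LinearMap.range δ ≤ N) :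
    ∃ (w : P₀ →ₗ[R] Y) (u : P₁ →ₗ[R] X), LinearMap.range w ≤ N ∧ LinearMap.range u ≤ M ∧
      w ∘ₗ ι - r ∘ₗ u = δ := by
  obtain ⟨u, hu⟩ := exists_comp_eq_of_forall_mem_range (r ∘ₗ M.subtype) (δ ∘ₗ G ∘ₗ ι - δ) <| by
    intro x
    have hmem : δ (G (ι x) - x) ∈ J • N := by
      refine Submodule.smul_mono le_rfl hδ ?_
      rw [← Submodule.map_top, ← Submodule.map_smul'']
      exact ⟨_, h.left x, rfl⟩
    rw [LinearMap.range_comp, Submodule.range_subtype]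
    simpa using hMN hmem
  refine ⟨δ ∘ₗ G, M.subtype ∘ₗ u, (LinearMap.range_comp_le_range _ _).trans hδ, ?_, ?_⟩
  · exact (LinearMap.range_comp_le_range _ _).trans (Submodule.range_subtype M).le
  · rw [← LinearMap.comp_assoc u, hu, LinearMap.comp_assoc, sub_sub_cancel]

theorem exists_lift [Module.Projective R P₁] [Module.Projective R P₀] (h : IsInverseModulo J ι G)
    {r : X →ₗ[R] Y} {r' : X' →ₗ[R] Y'} {α : X →ₗ[R] X'} {β : Y →ₗ[R] Y'} (hαβ : r' ∘ₗ α = β ∘ₗ r)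
    (hα : Function.Surjective α) (hβ : J • ⊤ ≤ LinearMap.range β)
    (hker : J • LinearMap.ker β ≤ (LinearMap.ker α).map r) {u' : P₁ →ₗ[R] X'} {w' : P₀ →ₗ[R] Y'}
    (huw : r' ∘ₗ u' = w' ∘ₗ ι) :
    ∃ (u : P₁ →ₗ[R] X) (w : P₀ →ₗ[R] Y), r ∘ₗ u = w ∘ₗ ι ∧ α ∘ₗ u = u' ∧ β ∘ₗ w = w' := by
  obtain ⟨u, rfl⟩ := Module.projective_lifting_property α u' hα
  have hβu : w' ∘ₗ ι = β ∘ₗ r ∘ₗ u := by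
    rw [← huw, ← LinearMap.comp_assoc, hαβ, LinearMap.comp_assoc]
  obtain ⟨w, rfl⟩ := h.exists_comp_eq hβ <| by
    rw [hβu]
    exact LinearMap.range_comp_le_range _ _
  have hδ : LinearMap.range (w ∘ₗ ι - r ∘ₗ u) ≤ LinearMap.ker β := by
    rw [LinearMap.range_le_ker_iff, LinearMap.comp_sub, ← hβu, LinearMap.comp_assoc, sub_self]
  obtain ⟨v, y, hv, hy, hvy⟩ := h.exists_comp_sub_comp_eq hker hδ
  refine ⟨u - y, w - v, ?_, ?_, ?_⟩
  · rw [LinearMap.comp_sub, LinearMap.sub_comp, sub_eq_sub_iff_sub_eq_sub, ← sub_eq_zero]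
    rw [← neg_sub (w ∘ₗ ι), ← hvy]
    abel
  · rw [LinearMap.comp_sub, LinearMap.range_le_ker_iff.1 hy, sub_zero]
  · rw [LinearMap.comp_sub, LinearMap.range_le_ker_iff.1 hv, sub_zero]

end IsInverseModulo

end InverseModulo

section FlatCokernel

variable {V : Type*} [CommRing V] {m : Ideal V} {P₁ P₀ T : Type*} [AddCommGroup P₁] [Module V P₁]
  [AddCommGroup P₀] [Module V P₀] [AddCommGroup T] [Module V T]

theorem mem_smul_top_iff_one_tmul_eq_zero {x : P₁} :
    x ∈ m • (⊤ : Submodule V P₁) ↔ (1 : V ⧸ m) ⊗ₜ[V] x = 0 := by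
  rw [← (TensorProduct.quotTensorEquivQuotSMul P₁ m).map_eq_zero_iff,
    TensorProduct.quotTensorEquivQuotSMul_mk_one_tmul, Submodule.Quotient.mk_eq_zero]

theorem comap_smul_top_le_of_exact_of_flat [Module.Flat V T] {ι : P₁ →ₗ[V] P₀} {π : P₀ →ₗ[V] T}
    (hι : Function.Injective ι) (hexact : Function.Exact ι π) (hπ : Function.Surjective π) :
    (m • (⊤ : Submodule V P₀)).comap ι ≤ m • ⊤ := by
  intro x hx
  rw [mem_smul_top_iff_one_tmul_eq_zero]
  have hx' : (1 : V ⧸ m) ⊗ₜ[V] ι x = 0 := mem_smul_top_iff_one_tmul_eq_zero.1 hx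
  refine LinearMap.lTensor_injective_of_exact_of_flat π hπ ι hι hexact (V ⧸ m) ?_
  rw [LinearMap.lTensor_tmul, hx', map_zero]

theorem exists_isInverseModulo [Module.Flat V T] [Module.Projective V P₀] {ι : P₁ →ₗ[V] P₀}
    {π : P₀ →ₗ[V] T} (hι : Function.Injective ι) (hexact : Function.Exact ι π)
    (hπ : Function.Surjective π) (hT : m • (⊤ : Submodule V T) = ⊤) :
    ∃ G : P₀ →ₗ[V] P₁, IsInverseModulo m ι G := by
  let q := (m • (⊤ : Submodule V P₀)).mkQ
  have hq (z : P₀) : q z ∈ LinearMap.range (q ∘ₗ ι) := by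
    have hz : π z ∈ (m • (⊤ : Submodule V P₀)).map π := by
      rw [Submodule.map_smul'', Submodule.map_top, LinearMap.range_eq_top.2 hπ, hT]
      trivial
    obtain ⟨y, hy, hyz⟩ := hz
    obtain ⟨x, hx⟩ := (hexact (z - y)).1 (by rw [map_sub, hyz, sub_self])
    have hqy : q y = 0 := (Submodule.Quotient.mk_eq_zero _).2 hy
    exact ⟨x, by rw [LinearMap.comp_apply, hx, map_sub, hqy, sub_zero]⟩
  obtain ⟨G, hG⟩ := exists_comp_eq_of_forall_mem_range (q ∘ₗ ι) q hq
  have hιG (z : P₀) : ι (G z) - z ∈ m • (⊤ : Submodule V P₀) :=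
    (Submodule.Quotient.eq _).1 (LinearMap.congr_fun hG z)
  refine ⟨G, fun x => comap_smul_top_le_of_exact_of_flat hι hexact hπ ?_, hιG⟩
  rw [Submodule.mem_comap, map_sub]
  exact hιG (ι x)

theorem smul_top_self_eq_top (hm : m * m = m) : m • (⊤ : Submodule V m) = ⊤ := by
  refine Submodule.map_injective_of_injective (Submodule.injective_subtype m) ?_
  rw [Submodule.map_smul'', Submodule.map_subtype_top, smul_eq_mul, hm]

theorem smul_top_tensorProduct_eq_top (h : m • (⊤ : Submodule V P₁) = ⊤) :
    m • (⊤ : Submodule V (P₁ ⊗[V] T)) = ⊤ := by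
  refine eq_top_iff.2 ((TensorProduct.span_tmul_eq_top V P₁ T).ge.trans (Submodule.span_le.2 ?_))
  rintro _ ⟨x, y, rfl⟩
  have hx : x ∈ m • (⊤ : Submodule V P₁) := h.ge trivial
  exact Submodule.smul_top_le_comap_smul_top m ((TensorProduct.mk V P₁ T).flip y) hx

end FlatCokernel

section IdempotentIdeal

variable {V : Type*} [CommRing V] {m : Ideal V} {P₁ P₀ : Type*} [AddCommGroup P₁] [Module V P₁]
  [AddCommGroup P₀] [Module V P₀]

variable (m) in
/-- The multiplication map `m ⊗ m → V`. -/
noncomputable def idealTensorMul : m ⊗[V] m →ₗ[V] V :=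
  TensorProduct.lift ((LinearMap.mul V V).compl₁₂ m.subtype m.subtype)

@[simp]
theorem idealTensorMul_tmul (x y : m) : idealTensorMul m (x ⊗ₜ[V] y) = x * y :=
  rfl

theorem idealTensorMul_smul_tmul (w : m ⊗[V] m) (x y : m) :
    idealTensorMul m w • (x ⊗ₜ[V] y) = (x * y : V) • w := by
  induction w with
  | zero => simp
  | add w w' h h' => rw [map_add, add_smul, smul_add, h, h']
  | tmul u v =>
    have hux : (u : V) • x = (x : V) • u := Subtype.ext (mul_comm _ _)
    have hvy : (v : V) • y = (y : V) • v := Subtype.ext (mul_comm _ _)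
    rw [idealTensorMul_tmul, ← TensorProduct.smul_tmul_smul, hux, hvy, TensorProduct.smul_tmul_smul]

theorem le_contractionIdeal_idealTensorMul [Module.Projective V P₀] (hm : m * m = m)
    {ι : P₁ →ₗ[V] P₀} {π : P₀ →ₗ[V] m ⊗[V] m} (hι : Function.Injective ι)
    (hexact : Function.Exact ι π) (hπ : Function.Surjective π) :
    m ≤ contractionIdeal ι (idealTensorMul m ∘ₗ π) := by
  refine hm.ge.trans (Ideal.mul_le.2 fun x hx y hy => ?_)
  obtain ⟨β, hβ⟩ := hπ ((⟨x, hx⟩ : m) ⊗ₜ (⟨y, hy⟩ : m))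
  let τ : V →ₗ[V] P₀ := LinearMap.toSpanSingleton V P₀ β
  obtain ⟨s, hs⟩ := exists_comp_eq_of_forall_mem_range ι
    ((x * y) • LinearMap.id - τ ∘ₗ idealTensorMul m ∘ₗ π) fun z => (hexact _).1 <| by
      simp [τ, hβ, idealTensorMul_smul_tmul]
  refine ⟨s, τ, LinearMap.ext fun z => hι ?_, ?_, ?_⟩
  · rw [← LinearMap.comp_apply, ← LinearMap.comp_assoc, hs]
    simp [hexact.apply_apply_eq_zero]
  · rw [hs, sub_add_cancel]
  · ext
    simp [τ, hβ]

end IdempotentIdeal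

section HomRetraction

variable {R : Type*} [CommRing R] {J : Ideal R} {K F E E' : Type*} [AddCommGroup K] [Module R K]
  [AddCommGroup F] [Module R F] [AddCommGroup E] [Module R E] [AddCommGroup E'] [Module R E']
  {i : K →ₗ[R] F}

theorem smul_top_le_range_compRight [Module.Projective R F] (hi : J ≤ retractionIdeal ⊥ i)
    {g : E →ₗ[R] E'} (hg : Function.Surjective g) :
    J • ⊤ ≤ LinearMap.range (LinearMap.compRight R g : (K →ₗ[R] E) →ₗ[R] K →ₗ[R] E') := by
  refine Submodule.smul_le.2 fun a ha φ _ => ?_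
  obtain ⟨ρ, hρ⟩ := mem_retractionIdeal_bot.1 (hi ha)
  obtain ⟨ψ, hψ⟩ := Module.projective_lifting_property g (φ ∘ₗ ρ) hg
  refine ⟨ψ ∘ₗ i, ?_⟩
  rw [LinearMap.compRight_apply, ← LinearMap.comp_assoc, hψ, LinearMap.comp_assoc, hρ,
    LinearMap.comp_smul, LinearMap.comp_id]

theorem smul_ker_compRight_le (hi : J ≤ retractionIdeal ⊥ i) (g : E →ₗ[R] E') :
    J • LinearMap.ker (LinearMap.compRight R g : (K →ₗ[R] E) →ₗ[R] K →ₗ[R] E') ≤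
      (LinearMap.ker (LinearMap.compRight R g)).map (LinearMap.lcomp R E i) := by
  refine Submodule.smul_le.2 fun a ha φ hφ => ?_
  obtain ⟨ρ, hρ⟩ := mem_retractionIdeal_bot.1 (hi ha)
  rw [LinearMap.mem_ker, LinearMap.compRight_apply] at hφ
  refine ⟨φ ∘ₗ ρ, LinearMap.mem_ker.2 ?_, ?_⟩
  · rw [LinearMap.compRight_apply, ← LinearMap.comp_assoc, hφ, LinearMap.zero_comp]
  · rw [LinearMap.lcomp_apply', LinearMap.comp_assoc, hρ, LinearMap.comp_smul, LinearMap.comp_id]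

end HomRetraction

section PushoutProduct

variable {R : Type*} [CommRing R] {A B A' B' : Type*} [AddCommGroup A] [Module R A]
  [AddCommGroup B] [Module R B] [AddCommGroup A'] [Module R A'] [AddCommGroup B'] [Module R B']

/-- The pushout product of `d : A → B` and `d' : A' → B'`, that is, the pushout of `A ⊗ B'` and
`B ⊗ A'` along `A ⊗ A'`. -/
abbrev PushoutProduct (d : A →ₗ[R] B) (d' : A' →ₗ[R] B') : Type _ :=
  ((A ⊗[R] B') × (B ⊗[R] A')) ⧸ LinearMap.range ((d'.lTensor A).prod (-d.rTensor A'))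

namespace PushoutProduct

variable (d : A →ₗ[R] B) (d' : A' →ₗ[R] B')

/-- The canonical map of `A ⊗ B'` into the pushout product. -/
noncomputable def inl : A ⊗[R] B' →ₗ[R] PushoutProduct d d' :=
  Submodule.mkQ _ ∘ₗ LinearMap.inl R _ _

/-- The canonical map of `B ⊗ A'` into the pushout product. -/
noncomputable def inr : B ⊗[R] A' →ₗ[R] PushoutProduct d d' :=
  Submodule.mkQ _ ∘ₗ LinearMap.inr R _ _

theorem condition : inl d d' ∘ₗ d'.lTensor A = inr d d' ∘ₗ d.rTensor A' := by
  refine LinearMap.ext fun x => (Submodule.Quotient.eq _).2 ⟨x, ?_⟩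
  simp

variable {d d'} {E E' : Type*} [AddCommGroup E] [Module R E] [AddCommGroup E'] [Module R E']

theorem hom_ext {f g : PushoutProduct d d' →ₗ[R] E} (hl : f ∘ₗ inl d d' = g ∘ₗ inl d d')
    (hr : f ∘ₗ inr d d' = g ∘ₗ inr d d') : f = g :=
  Submodule.linearMap_qext _ (LinearMap.prod_ext hl hr)

/-- The map out of the pushout product given by its universal property. -/
noncomputable def desc (u : A ⊗[R] B' →ₗ[R] E) (w : B ⊗[R] A' →ₗ[R] E)
    (h : u ∘ₗ d'.lTensor A = w ∘ₗ d.rTensor A') : PushoutProduct d d' →ₗ[R] E :=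
  (LinearMap.range _).liftQ (u.coprod w) <| LinearMap.range_le_ker_iff.2 <| by
    refine LinearMap.ext fun x => ?_
    simpa [sub_eq_zero, ← sub_eq_add_neg] using LinearMap.congr_fun h x

variable {u : A ⊗[R] B' →ₗ[R] E} {w : B ⊗[R] A' →ₗ[R] E}

@[simp]
theorem desc_inl (h : u ∘ₗ d'.lTensor A = w ∘ₗ d.rTensor A') (x : A ⊗[R] B') :
    desc u w h (inl d d' x) = u x := by
  simp [desc, inl]

@[simp]
theorem desc_inr (h : u ∘ₗ d'.lTensor A = w ∘ₗ d.rTensor A') (x : B ⊗[R] A') :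
    desc u w h (inr d d' x) = w x := by
  simp [desc, inr]

theorem exists_comp_eq [Module.Projective R A] [Module.Projective R B] [Module.Projective R B']
    {J : Ideal R} {G : B →ₗ[R] A} (hG : IsInverseModulo J d G) (hd' : J ≤ retractionIdeal ⊥ d')
    {g : E →ₗ[R] E'} (hg : Function.Surjective g) (f : PushoutProduct d d' →ₗ[R] E') :
    ∃ h : PushoutProduct d d' →ₗ[R] E, g ∘ₗ h = f := by
  have hcomm : LinearMap.lcomp R E' d' ∘ₗ LinearMap.compRight R g =
      LinearMap.compRight R g ∘ₗ LinearMap.lcomp R E d' := rfl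
  have hf : LinearMap.lcomp R E' d' ∘ₗ TensorProduct.curry (f ∘ₗ inl d d') =
      TensorProduct.curry (f ∘ₗ inr d d') ∘ₗ d :=
    LinearMap.ext₂ fun x y => congr(f ($(condition d d') (x ⊗ₜ y)))
  obtain ⟨u, w, huw, hu, hw⟩ := hG.exists_lift hcomm
    (fun φ => Module.projective_lifting_property g φ hg) (smul_top_le_range_compRight hd' hg)
    (smul_ker_compRight_le hd' g) hf
  have hu (x y) : g (u x y) = f (inl d d' (x ⊗ₜ y)) := congr($hu x y)
  have hw (x y) : g (w x y) = f (inr d d' (x ⊗ₜ y)) := congr($hw x y)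
  exact ⟨desc (TensorProduct.lift u) (TensorProduct.lift w)
      (TensorProduct.ext' fun x y => congr($huw x y)),
    hom_ext (TensorProduct.ext' fun x y => by simp [hu])
      (TensorProduct.ext' fun x y => by simp [hw])⟩

theorem projective [Module.Projective R A] [Module.Projective R B] [Module.Projective R B']
    {J : Ideal R} {G : B →ₗ[R] A} (hG : IsInverseModulo J d G) (hd' : J ≤ retractionIdeal ⊥ d') :
    Module.Projective R (PushoutProduct d d') :=
  .of_lifting_property'' fun _ hg => exists_comp_eq hG hd' hg _

variable (d d') in
/-- The pushout product of `d` and `d'` as a map to `B ⊗ B'`, given by `d ⊗ id` and `id ⊗ d'`. -/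
noncomputable def toTensor : PushoutProduct d d' →ₗ[R] B ⊗[R] B' :=
  desc (d.rTensor B') (d'.lTensor B) <| by
    rw [LinearMap.rTensor_comp_lTensor, LinearMap.lTensor_comp_rTensor]

@[simp]
theorem toTensor_inl (x : A ⊗[R] B') : toTensor d d' (inl d d' x) = d.rTensor B' x :=
  desc_inl _ x

@[simp]
theorem toTensor_inr (x : B ⊗[R] A') : toTensor d d' (inr d d' x) = d'.lTensor B x :=
  desc_inr _ x

variable {C C' : Type*} [AddCommGroup C] [Module R C] [AddCommGroup C'] [Module R C']
  {e : B →ₗ[R] C} {e' : B' →ₗ[R] C'}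

theorem map_comp_toTensor (hed : e ∘ₗ d = 0) (hed' : e' ∘ₗ d' = 0) :
    TensorProduct.map e e' ∘ₗ toTensor d d' = 0 := by
  have hed (y) : e (d y) = 0 := LinearMap.congr_fun hed y
  have hed' (y') : e' (d' y') = 0 := LinearMap.congr_fun hed' y'
  exact hom_ext (TensorProduct.ext' fun y x' => by simp [hed])
    (TensorProduct.ext' fun x y' => by simp [hed'])

theorem contractionIdeal_mul_le (hed' : e' ∘ₗ d' = 0) :
    contractionIdeal d e * contractionIdeal d' e' ≤
      contractionIdeal (toTensor d d') (TensorProduct.map e e') := by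
  refine Ideal.mul_le.2 fun a ⟨s, t, hsd, hst, het⟩ b ⟨s', t', hsd', hst', het'⟩ =>
    ⟨a • inr d d' ∘ₗ s'.lTensor B + inl d d' ∘ₗ TensorProduct.map s (t' ∘ₗ e'),
      TensorProduct.map t t', hom_ext (TensorProduct.ext' fun y x' => ?_)
        (TensorProduct.ext' fun x y' => ?_), TensorProduct.ext' fun x x' => ?_, ?_⟩
  · have hsd : s (d y) = a • y := LinearMap.congr_fun hsd y
    have hst' : d' (s' x') + t' (e' x') = b • x' := LinearMap.congr_fun hst' x'
    have hglue : inr d d' (d y ⊗ₜ s' x') = inl d d' (y ⊗ₜ d' (s' x')) :=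
      (LinearMap.congr_fun (condition d d') (y ⊗ₜ s' x')).symm
    calc a • inr d d' (d y ⊗ₜ s' x') + inl d d' (s (d y) ⊗ₜ t' (e' x'))
      _ = a • inl d d' (y ⊗ₜ (d' (s' x') + t' (e' x'))) := by
        rw [hsd, hglue, ← TensorProduct.smul_tmul', map_smul, TensorProduct.tmul_add, map_add,
          smul_add]
      _ = (a * b) • inl d d' (y ⊗ₜ x') := by
        rw [hst', TensorProduct.tmul_smul, map_smul, smul_smul]
  · have hsd' : s' (d' y') = b • y' := LinearMap.congr_fun hsd' y'
    have hed' : e' (d' y') = 0 := LinearMap.congr_fun hed' y'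
    simp [hsd', hed', smul_smul]
  · have hst : d (s x) + t (e x) = a • x := LinearMap.congr_fun hst x
    have hst' : d' (s' x') + t' (e' x') = b • x' := LinearMap.congr_fun hst' x'
    calc toTensor d d' (a • inr d d' (x ⊗ₜ s' x') + inl d d' (s x ⊗ₜ t' (e' x'))) +
          t (e x) ⊗ₜ t' (e' x')
      _ = a • x ⊗ₜ d' (s' x') + (d (s x) + t (e x)) ⊗ₜ t' (e' x') := by
        simp [TensorProduct.add_tmul, add_assoc]
      _ = a • x ⊗ₜ (d' (s' x') + t' (e' x')) := by
        rw [hst, TensorProduct.smul_tmul', TensorProduct.smul_tmul', TensorProduct.tmul_add]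
      _ = (a * b) • x ⊗ₜ x' := by rw [hst', TensorProduct.tmul_smul, smul_smul]
  · rw [← TensorProduct.map_comp, het, het', TensorProduct.map_smul_left,
      TensorProduct.map_smul_right, TensorProduct.map_id, smul_smul]

end PushoutProduct

end PushoutProduct

section Resolution

theorem contractionIdeal_le_contractionIdeal_equiv_comp {R : Type*} [CommRing R] {A B C C' : Type*}
    [AddCommGroup A] [Module R A] [AddCommGroup B] [Module R B] [AddCommGroup C] [Module R C]
    [AddCommGroup C'] [Module R C'] (d : A →ₗ[R] B) (e : B →ₗ[R] C) (ε : C ≃ₗ[R] C') :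
    contractionIdeal d e ≤ contractionIdeal d (ε.toLinearMap ∘ₗ e) := by
  rintro a ⟨s, t, hsd, hst, het⟩
  have het (x) : e (t x) = a • x := LinearMap.congr_fun het x
  refine ⟨s, t ∘ₗ ε.symm.toLinearMap, hsd, ?_, LinearMap.ext fun x => by simp [het]⟩
  rw [LinearMap.comp_assoc, ← LinearMap.comp_assoc e, LinearEquiv.symm_comp, LinearMap.id_comp, hst]

theorem baseChange_smul_id {R : Type*} [CommRing R] {M : Type*} [AddCommGroup M] [Module R M]
    (S : Type*) [CommRing S] [Algebra R S] (a : R) :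
    (a • LinearMap.id : M →ₗ[R] M).baseChange S = algebraMap R S a • LinearMap.id := by
  rw [LinearMap.baseChange_smul, LinearMap.baseChange_id, algebraMap_smul]

theorem map_contractionIdeal_le_contractionIdeal_baseChange {R : Type*} [CommRing R]
    {A B C : Type*} [AddCommGroup A] [Module R A] [AddCommGroup B] [Module R B] [AddCommGroup C]
    [Module R C] (d : A →ₗ[R] B) (e : B →ₗ[R] C) (S : Type*) [CommRing S] [Algebra R S] :
    (contractionIdeal d e).map (algebraMap R S) ≤
      contractionIdeal (d.baseChange S) (e.baseChange S) := by
  refine Ideal.map_le_iff_le_comap.2 fun a ⟨s, t, hsd, hst, het⟩ =>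
    ⟨s.baseChange S, t.baseChange S, ?_, ?_, ?_⟩
  · rw [← LinearMap.baseChange_comp, hsd, baseChange_smul_id]
  · rw [← LinearMap.baseChange_comp, ← LinearMap.baseChange_comp, ← LinearMap.baseChange_add, hst,
      baseChange_smul_id]
  · rw [← LinearMap.baseChange_comp, het, baseChange_smul_id]

theorem contractionIdeal_le_retractionIdeal_bot {R : Type*} [CommRing R] {A B C : Type*}
    [AddCommGroup A] [Module R A] [AddCommGroup B] [Module R B] [AddCommGroup C] [Module R C]
    (d : A →ₗ[R] B) (e : B →ₗ[R] C) : contractionIdeal d e ≤ retractionIdeal ⊥ d :=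
  fun _ ⟨s, _, hsd, _⟩ => mem_retractionIdeal_bot.2 ⟨s, hsd⟩

theorem exists_projective_le_contractionIdeal {V : Type v} [CommRing V] {m : Ideal V}
    (hm : m * m = m) [Module.Flat V (m ⊗[V] m)] {P₁ P₀ : Type v} [AddCommGroup P₁] [Module V P₁]
    [AddCommGroup P₀] [Module V P₀] [Module.Projective V P₁] [Module.Projective V P₀]
    {ι : P₁ →ₗ[V] P₀} {π : P₀ →ₗ[V] m ⊗[V] m} (hι : Function.Injective ι)
    (hexact : Function.Exact ι π) (hπ : Function.Surjective π)
    {S : Type u} [CommRing S] [Algebra V S] {K F : Type u} {M : Type*} [AddCommGroup K]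
    [Module S K] [AddCommGroup F] [Module S F] [Module.Projective S F] [AddCommGroup M] [Module S M]
    {i : K →ₗ[S] F} {p : F →ₗ[S] M} (hpi : p ∘ₗ i = 0)
    (hp : m.map (algebraMap V S) ≤ contractionIdeal i p) :
    ∃ (L₁ L₀ : Type max u v) (_ : AddCommGroup L₁) (_ : AddCommGroup L₀) (_ : Module S L₁)
      (_ : Module S L₀) (d : L₁ →ₗ[S] L₀) (e : L₀ →ₗ[S] M),
      Module.Projective S L₁ ∧ Module.Projective S L₀ ∧ e ∘ₗ d = 0 ∧
        m.map (algebraMap V S) ≤ contractionIdeal d e := by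
  let d := ι.baseChange S
  let e := (idealTensorMul m ∘ₗ π).baseChange S
  let ε : (S ⊗[V] V) ⊗[S] M ≃ₗ[S] M :=
    TensorProduct.congr (TensorProduct.AlgebraTensorModule.rid V S S) (LinearEquiv.refl S M) ≪≫ₗ
      TensorProduct.lid S M
  have hd : m.map (algebraMap V S) ≤ contractionIdeal d e :=
    (Ideal.map_mono (le_contractionIdeal_idealTensorMul hm hι hexact hπ)).trans
      (map_contractionIdeal_le_contractionIdeal_baseChange _ _ S)
  have hed : e ∘ₗ d = 0 := by
    rw [← LinearMap.baseChange_comp, LinearMap.comp_assoc, hexact.linearMap_comp_eq_zero,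
      LinearMap.comp_zero, LinearMap.baseChange_zero]
  obtain ⟨G, hG⟩ := exists_isInverseModulo hι hexact hπ
    (smul_top_tensorProduct_eq_top (smul_top_self_eq_top hm))
  refine ⟨PushoutProduct d i, (S ⊗[V] P₀) ⊗[S] F, inferInstance, inferInstance,
    inferInstance, inferInstance, PushoutProduct.toTensor d i,
    ε.toLinearMap ∘ₗ TensorProduct.map e p,
    PushoutProduct.projective (hG.baseChange S) (hp.trans <|
      contractionIdeal_le_retractionIdeal_bot i p), inferInstance, ?_, ?_⟩
  · rw [LinearMap.comp_assoc, PushoutProduct.map_comp_toTensor hed hpi, LinearMap.comp_zero]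
  · calc m.map (algebraMap V S)
      _ = m.map (algebraMap V S) * m.map (algebraMap V S) := by rw [← Ideal.map_mul, hm]
      _ ≤ contractionIdeal d e * contractionIdeal i p := Ideal.mul_mono hd hp
      _ ≤ _ := (PushoutProduct.contractionIdeal_mul_le hpi).trans
        (contractionIdeal_le_contractionIdeal_equiv_comp _ _ ε)

end Resolution

section Lift

theorem exists_isAlmostReduction_of_isNilpotent_ker {R : Type u} {S : Type*} [CommRing R]
    [CommRing S] [Algebra R S] (hsurj : Function.Surjective (algebraMap R S))
    (hnil : IsNilpotent (RingHom.ker (algebraMap R S))) {J : Ideal R} (hJ : J * J = J)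
    {L₁ : Type*} {L₀ : Type w} [AddCommGroup L₁] [Module S L₁] [AddCommGroup L₀] [Module S L₀]
    [Module.Projective S L₁] [Module.Projective S L₀] {M : Type u} [AddCommGroup M] [Module S M]
    [Module R M] [IsScalarTower R S M] {d : L₁ →ₗ[S] L₀} {e : L₀ →ₗ[S] M} (hed : e ∘ₗ d = 0)
    (hde : J.map (algebraMap R S) ≤ contractionIdeal d e) :
    ∃ (P : Type u) (_ : AddCommGroup P) (_ : Module R P) (σ : P →ₗ[R] M),
      J ≤ freeFactorIdeal R P ∧ IsAlmostReduction J (RingHom.ker (algebraMap R S)) σ := by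
  let := Module.compHom L₁ (algebraMap R S)
  let := Module.compHom L₀ (algebraMap R S)
  have : IsScalarTower R S L₁ := .of_algebraMap_smul fun _ _ => rfl
  have : IsScalarTower R S L₀ := .of_algebraMap_smul fun _ _ => rfl
  obtain ⟨K₁, _, _, q₁, _, hq₁, hker₁⟩ := exists_projective_of_isNilpotent_ker hsurj hnil L₁
  obtain ⟨K₀, _, _, q₀, _, hq₀, hker₀⟩ := exists_projective_of_isNilpotent_ker hsurj hnil L₀
  obtain ⟨P, _, _, σ, hP, hσ⟩ := exists_isAlmostReduction_of_contraction hJ hnil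
    (d := d.restrictScalars R) (e := e.restrictScalars R)
    (LinearMap.ext fun x => LinearMap.congr_fun hed x)
    (le_contractionIdeal_restrictScalars hde) hq₁ hker₁ hq₀ hker₀
  exact hσ.exists_small hJ hnil hP

theorem IsAlmostReduction.exists_quotient {V R : Type*} [CommRing V] [CommRing R] [Algebra V R]
    {m : Ideal V} {I : Ideal R} {P M : Type*} [AddCommGroup P] [Module R P] [AddCommGroup M]
    [Module R M] {σ : P →ₗ[R] M} (hσ : IsAlmostReduction (m.map (algebraMap V R)) I σ)
    (hM : I • (⊤ : Submodule R M) = ⊥) :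
    ∃ τ : (P ⧸ (I • ⊤ : Submodule R P)) →ₗ[R] M,
      (∀ a ∈ m, ∀ x ∈ LinearMap.ker τ, algebraMap V R a • x = 0) ∧
        ∀ a ∈ m, ∀ y, algebraMap V R a • y ∈ LinearMap.range τ := by
  have hle : I • ⊤ ≤ LinearMap.ker σ := by
    rw [LinearMap.ker, ← hM]
    exact Submodule.smul_top_le_comap_smul_top I σ
  refine ⟨(I • ⊤ : Submodule R P).liftQ σ hle, fun a ha x hx => ?_, fun a ha y => ?_⟩
  · obtain ⟨x, rfl⟩ := Submodule.mkQ_surjective _ x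
    exact (Submodule.Quotient.mk_eq_zero _).2
      (Submodule.mem_colon.1 (hσ.le_colon_ker (Ideal.mem_map_of_mem _ ha)) x hx)
  · rw [Submodule.range_liftQ]
    exact Submodule.mem_colon.1 (hσ.le_colon_range (Ideal.mem_map_of_mem _ ha)) y trivial

theorem ker_algebraMap_smul_top_eq_bot (R S M : Type*) [CommRing R] [CommRing S] [Algebra R S]
    [AddCommGroup M] [Module S M] [Module R M] [IsScalarTower R S M] :
    RingHom.ker (algebraMap R S) • (⊤ : Submodule R M) = ⊥ := by
  refine le_bot_iff.1 (Submodule.smul_le.2 fun a ha x _ => ?_)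
  rw [← algebraMap_smul S, RingHom.mem_ker.1 ha, zero_smul]
  exact zero_mem _

end Lift

/-- Let `m·m = m`, with `m̃ = m ⊗_V m` a flat `V`-module of projective
dimension at most `1`.  Let `R` be a `V`-algebra, `I ⊆ R` a nilpotent ideal and
`R' = R/I`.  Let `P'` be an almost projective `R'`-module.  Then:
(i) there are an almost projective `R`-module `P` and an `R`-linear map
`σ : P/IP → P'` which is an almost isomorphism;
(ii) if moreover `P'` is almost finitely presented over `R'`, then `P` may be chosen
almost finitely presented over `R`. -/
theorem lift_almost_projective_along_nilpotent
    (V : Type v) [CommRing V] (m : Ideal V) (hm : m * m = m)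
    (hflat : Module.Flat V (TensorProduct V m m))
    (hpd : ∃ (P₁ P₀ : Type v) (_ : AddCommGroup P₁) (_ : AddCommGroup P₀)
      (_ : Module V P₁) (_ : Module V P₀),
      Module.Projective V P₁ ∧ Module.Projective V P₀ ∧
        ∃ (ι : P₁ →ₗ[V] P₀) (π : P₀ →ₗ[V] TensorProduct V m m),
          Function.Injective ι ∧ Function.Surjective π ∧
            LinearMap.ker π = LinearMap.range ι)
    (R : Type u) [CommRing R] [Algebra V R]
    (I : Ideal R) (hnil : ∃ k : ℕ, I ^ k = ⊥)
    (R' : Type u) [CommRing R'] [Algebra V R'] [Algebra R R'] [IsScalarTower V R R']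
    (hsurj : Function.Surjective (algebraMap R R'))
    (hkerI : RingHom.ker (algebraMap R R') = I)
    (P' : Type u) [AddCommGroup P'] [Module R' P'] [Module R P']
    [IsScalarTower R R' P']
    (hP' : IsAlmostProjective V m R' P') :
    (∃ (P : Type u) (_ : AddCommGroup P) (_ : Module R P),
      IsAlmostProjective V m R P ∧
        ∃ σ : (P ⧸ (I • (⊤ : Submodule R P))) →ₗ[R] P',
          (∀ a ∈ m, ∀ x ∈ LinearMap.ker σ, algebraMap V R a • x = 0) ∧
            (∀ a ∈ m, ∀ y : P', algebraMap V R a • y ∈ LinearMap.range σ)) ∧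
    (IsAlmostFP V m R' P' →
      ∃ (P : Type u) (_ : AddCommGroup P) (_ : Module R P),
        IsAlmostProjective V m R P ∧ IsAlmostFP V m R P ∧
          ∃ σ : (P ⧸ (I • (⊤ : Submodule R P))) →ₗ[R] P',
            (∀ a ∈ m, ∀ x ∈ LinearMap.ker σ, algebraMap V R a • x = 0) ∧
              (∀ a ∈ m, ∀ y : P', algebraMap V R a • y ∈ LinearMap.range σ)) := by
  obtain ⟨P₁, P₀, _, _, _, _, _, _, ι, π, hι, hπ, hker⟩ := hpd
  subst hkerI
  obtain ⟨k, hk⟩ := hnil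
  let J := m.map (algebraMap V R)
  have hJ : J * J = J := by rw [← Ideal.map_mul, hm]
  have hJ' : J.map (algebraMap R R') = m.map (algebraMap V R') := by
    rw [Ideal.map_map, ← IsScalarTower.algebraMap_eq]
  obtain ⟨L₁, L₀, _, _, _, _, d, e, _, _, hed, hde⟩ :=
    exists_projective_le_contractionIdeal hm hι (LinearMap.exact_iff.2 hker) hπ
      (LinearMap.comp_ker_subtype _)
      ((isAlmostProjective_iff.1 hP').trans (sectionIdeal_le_contractionIdeal _))
  obtain ⟨P, _, _, σ, hP, hσ⟩ :=
    exists_isAlmostReduction_of_isNilpotent_ker hsurj ⟨k, hk⟩ hJ hed (hJ'.trans_le hde)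
  obtain ⟨τ, hτ⟩ := hσ.exists_quotient (ker_algebraMap_smul_top_eq_bot R R' P')
  refine ⟨⟨P, _, _, isAlmostProjective_iff.2 hP, τ, hτ⟩, fun hfp =>
    ⟨P, _, _, isAlmostProjective_iff.2 hP, isAlmostFP_of_map_le hm ?_ hP, τ, hτ⟩⟩
  exact hσ.le_fgIdeal_bot hJ ⟨k, hk⟩ <|
    map_fgIdeal_le_of_surjective hsurj (hJ'.trans_le (map_le_fgIdeal_of_isAlmostFP hfp))
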